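/- Let φ: ℝ² → ℝ be a homogeneous polynomial of degree J ≥ 2 with ∇φ(0) = 0 which is not of the form C(λ₁z₁ + λ₂z₂)^J for any C ∈ ℝ, λ₁, λ₂ ∈ ℂ. Then every real linear form that divides the Hessian determinant ω := det D²φ with multiplicity strictly greater than J − 2 also divides φ. (Equivalently: for homogeneous φ satisfying these hypotheses, if the maximal multiplicity T of a real factor of ω exceeds d_ω = J − 2, then the corresponding factor f_T is linear and has multiplicity at least 1 in φ.) -/

import Mathlib

open MvPolynomial

/-- The Hessian determinant ω = ∂₁²φ·∂₂²φ − (∂₁∂₂φ)² of a two-variable polynomial. -/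
noncomputable def hessDet (φ : MvPolynomial (Fin 2) ℝ) : MvPolynomial (Fin 2) ℝ :=
  pderiv 0 (pderiv 0 φ) * pderiv 1 (pderiv 1 φ) - (pderiv 0 (pderiv 1 φ)) ^ 2

/-!
Suppose the linear form `l` does not divide `φ`, and let `v` span the kernel of `l`, so that
`φ(v) ≠ 0`. By Euler's identity there is a direction `u` with `l(u) = 1` along which `φ` is
stationary at `v`. Put `p(t) = φ(v + t u)`. Evaluating the Hessian form on the position vector
and on `u` shows, again by Euler, that `J (J - 1) p p'' - (J - 1)² p'²` is, up to a nonzero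
constant, the Hessian determinant along the line `v + t u`, where `l` takes the value `t`. Hence
`t ^ (J - 1)` divides this expression; as `p(0) ≠ 0` and `p'(0) = 0`, this forces `t ^ J ∣ p'`, so
`p` is constant. Homogeneity then makes `φ` a multiple of the `J`-th power of the linear form `m`
with `m(v) = 1` and `m(u) = 0`.
-/

section Univariate

variable {R : Type*} [CommRing R] [IsDomain R] [CharZero R] {p : Polynomial R}

lemma X_pow_succ_dvd_of_X_pow_dvd_derivative {n : ℕ} (h0 : p.coeff 0 = 0)
    (h : Polynomial.X ^ n ∣ p.derivative) : Polynomial.X ^ (n + 1) ∣ p := by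
  refine Polynomial.X_pow_dvd_iff.2 fun k hk => ?_
  obtain _ | k := k
  · exact h0
  have hcoeff := Polynomial.X_pow_dvd_iff.1 h k (by omega)
  rw [Polynomial.coeff_derivative] at hcoeff
  exact (mul_eq_zero.1 hcoeff).resolve_right k.cast_add_one_ne_zero

lemma X_pow_succ_dvd_derivative {A B : R} {n : ℕ} (hA : A ≠ 0) (h0 : p.coeff 0 ≠ 0)
    (h1 : p.derivative.coeff 0 = 0)
    (h : Polynomial.X ^ n ∣ Polynomial.C A * (p * p.derivative.derivative) -
      Polynomial.C B * p.derivative ^ 2) :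
    Polynomial.X ^ (n + 1) ∣ p.derivative := by
  induction n with
  | zero => simpa [Polynomial.X_dvd_iff] using h1
  | succ n ih =>
    have hd : Polynomial.X ^ (n + 1) ∣ p.derivative := ih ((pow_dvd_pow _ n.le_succ).trans h)
    have hmul : Polynomial.X ^ (n + 1) ∣ Polynomial.C A * (p * p.derivative.derivative) :=
      (dvd_sub_left ((dvd_pow hd two_ne_zero).mul_left _)).1 h
    have hprime : ¬ Polynomial.X ∣ Polynomial.C A * p := by
      simpa [Polynomial.X_dvd_iff] using ⟨hA, h0⟩
    rw [← mul_assoc] at hmul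
    exact X_pow_succ_dvd_of_X_pow_dvd_derivative h1
      (Polynomial.prime_X.pow_dvd_of_dvd_mul_left _ hprime hmul)

lemma eq_C_of_X_pow_dvd_derivative {n : ℕ} (hdeg : p.natDegree ≤ n)
    (h : Polynomial.X ^ n ∣ p.derivative) : p = Polynomial.C (p.coeff 0) := by
  refine Polynomial.eq_C_of_natDegree_eq_zero (by_contra fun hp => hp ?_)
  refine Polynomial.derivative_eq_zero.1 (Polynomial.eq_zero_of_dvd_of_natDegree_lt h ?_)
  rw [Polynomial.natDegree_X_pow]
  exact (Polynomial.natDegree_derivative_lt hp).trans_le hdeg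

end Univariate

lemma X_zero_dvd_homogenize {R : Type*} [CommSemiring R] {p : Polynomial R} (hp : p.coeff 0 = 0)
    (n : ℕ) : X 0 ∣ p.homogenize n := by
  refine Finset.dvd_sum fun kl _ => X_dvd_monomial.2 ?_
  obtain hk | hk := eq_or_ne kl.1 0
  · exact Or.inl (hk ▸ hp)
  · exact Or.inr (by simpa using hk)

section Derivatives

variable {R σ : Type*} [CommRing R]

/-- The Hessian matrix `(∂ᵢ∂ⱼφ)` of a polynomial. -/
noncomputable def hessianMatrix (φ : MvPolynomial σ R) : Matrix σ σ (MvPolynomial σ R) :=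
  Matrix.of fun i j => pderiv i (pderiv j φ)

lemma pderiv_pderiv_comm (i j : σ) (φ : MvPolynomial σ R) :
    pderiv i (pderiv j φ) = pderiv j (pderiv i φ) := by
  classical
  have h : ⁅pderiv (R := R) i, pderiv (R := R) j⁆ = 0 := by
    refine derivation_ext fun k => ?_
    simp [Derivation.commutator_apply, pderiv_X, Pi.single_apply, apply_ite]
  have := DFunLike.congr_fun h φ
  rwa [Derivation.commutator_apply, Derivation.zero_apply, sub_eq_zero] at this

lemma hessianMatrix_isSymm (φ : MvPolynomial σ R) : (hessianMatrix φ).IsSymm :=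
  Matrix.IsSymm.ext fun i j => pderiv_pderiv_comm j i φ

/-- The restriction of a polynomial to the parametrized line `t ↦ v + t u`. -/
noncomputable def restrictLine (v u : σ → R) : MvPolynomial σ R →ₐ[R] Polynomial R :=
  aeval fun i => Polynomial.C (v i) + Polynomial.C (u i) * Polynomial.X

lemma coeff_zero_restrictLine (v u : σ → R) (φ : MvPolynomial σ R) :
    (restrictLine v u φ).coeff 0 = eval v φ := by
  rw [Polynomial.coeff_zero_eq_aeval_zero, restrictLine, comp_aeval_apply]
  simp [aeval_eq_eval]

lemma natDegree_restrictLine_le (v u : σ → R) (φ : MvPolynomial σ R) :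
    (restrictLine v u φ).natDegree ≤ φ.totalDegree := by
  simpa [restrictLine] using aeval_natDegree_le (n := 1) φ le_rfl
    (fun i => Polynomial.C (v i) + Polynomial.C (u i) * Polynomial.X) fun i => by compute_degree

variable [Fintype σ]

/-- The derivative `∑ uᵢ ∂ᵢ` of polynomials in a constant direction `u`. -/
noncomputable def dirDeriv (u : σ → R) : Derivation R (MvPolynomial σ R) (MvPolynomial σ R) :=
  ∑ i, u i • pderiv i

lemma dirDeriv_apply (u : σ → R) (φ : MvPolynomial σ R) :
    dirDeriv u φ = ∑ i, C (u i) * pderiv i φ := by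
  refine (congrFun (map_sum (Derivation.coeFnAddMonoidHom (R := R) (A := MvPolynomial σ R)
    (M := MvPolynomial σ R)) _ _) φ).trans ?_
  simp [Derivation.coeFnAddMonoidHom_apply, smul_eq_C_mul]

lemma dirDeriv_X (u : σ → R) (i : σ) : dirDeriv u (X i) = C (u i) := by
  classical
  simp [dirDeriv_apply, pderiv_X, Pi.single_apply]

lemma derivative_restrictLine (v u : σ → R) (φ : MvPolynomial σ R) :
    (restrictLine v u φ).derivative = restrictLine v u (dirDeriv u φ) := by
  induction φ using MvPolynomial.induction_on with
  | C r => simp [restrictLine, derivation_C]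
  | add φ ψ hφ hψ => simp only [map_add, hφ, hψ]
  | mul_X φ i hφ =>
    simp only [map_mul, Polynomial.derivative_mul, hφ, Derivation.leibniz, dirDeriv_X, smul_eq_mul,
      map_add]
    simp only [restrictLine, aeval_X, algHom_C, Polynomial.algebraMap_eq, Polynomial.derivative_add,
      Polynomial.derivative_C_mul, Polynomial.derivative_C, Polynomial.derivative_X]
    ring

lemma dotProduct_hessianMatrix_mulVec_C (u : σ → R) (φ : MvPolynomial σ R) :
    (fun i => C (u i)) ⬝ᵥ (hessianMatrix φ).mulVec (fun i => C (u i)) =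
      dirDeriv u (dirDeriv u φ) := by
  rw [dirDeriv_apply u (dirDeriv u φ), dirDeriv_apply]
  simp only [dotProduct, Matrix.mulVec, hessianMatrix, Matrix.of_apply, map_sum, pderiv_C_mul,
    mul_comm (pderiv _ (pderiv _ φ))]

variable {φ : MvPolynomial σ R} {J : ℕ}

/- Differentiating Euler's identity `∑ Xⱼ ∂ⱼφ = J φ`, rather than applying it to `∂ᵢφ`, avoids the
truncated degree `J - 1` of `∂ᵢφ`. -/
lemma hessianMatrix_mulVec_X (hφ : φ.IsHomogeneous J) :
    (hessianMatrix φ).mulVec X = fun i => C (J - 1 : R) * pderiv i φ := by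
  classical
  funext i
  have h := congrArg (pderiv i) hφ.sum_X_mul_pderiv
  simp only [map_sum, Derivation.leibniz, smul_eq_mul, pderiv_X, Finset.sum_add_distrib,
    nsmul_eq_mul] at h
  simp only [Matrix.mulVec, dotProduct, hessianMatrix, Matrix.of_apply, mul_comm _ (X _)]
  simp only [Pi.single_apply, mul_ite, mul_one, mul_zero, Finset.sum_ite_eq', Finset.mem_univ,
    if_true, Derivation.map_natCast, add_zero, C_sub, map_natCast, C_1] at h ⊢
  linear_combination h

lemma X_dotProduct_hessianMatrix_mulVec_X (hφ : φ.IsHomogeneous J) :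
    X ⬝ᵥ (hessianMatrix φ).mulVec X = C (J * (J - 1) : R) * φ := by
  have euler := hφ.sum_X_mul_pderiv
  rw [hessianMatrix_mulVec_X hφ]
  simp only [dotProduct, mul_left_comm (X _), ← Finset.mul_sum, euler, nsmul_eq_mul, map_mul,
    map_natCast]
  ring

lemma C_dotProduct_hessianMatrix_mulVec_X (hφ : φ.IsHomogeneous J) (u : σ → R) :
    (fun i => C (u i)) ⬝ᵥ (hessianMatrix φ).mulVec X = C (J - 1 : R) * dirDeriv u φ := by
  rw [hessianMatrix_mulVec_X hφ]
  simp only [dotProduct, mul_left_comm (C (u _)), ← Finset.mul_sum, dirDeriv_apply]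

end Derivatives

section BinaryForm

variable {R : Type*} [CommRing R] {φ : MvPolynomial (Fin 2) R} {J : ℕ}

/- With `P` the matrix with columns `x` and `y`, both sides are `det (Pᵀ M P)`. -/
lemma gram_det_eq_wedge_sq_mul_det {M : Matrix (Fin 2) (Fin 2) R} (hM : M.IsSymm)
    (x y : Fin 2 → R) :
    (x ⬝ᵥ M.mulVec x) * (y ⬝ᵥ M.mulVec y) - (y ⬝ᵥ M.mulVec x) ^ 2 =
      (x 0 * y 1 - x 1 * y 0) ^ 2 * M.det := by
  have h : M 1 0 = M 0 1 := hM.apply 0 1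
  simp only [dotProduct, Matrix.mulVec, Fin.sum_univ_two, Matrix.det_fin_two, h]
  ring

lemma wedge_sq_mul_det_hessianMatrix (hφ : φ.IsHomogeneous J) (u : Fin 2 → R) :
    (X 0 * C (u 1) - X 1 * C (u 0)) ^ 2 * (hessianMatrix φ).det =
      C (J * (J - 1) : R) * (φ * dirDeriv u (dirDeriv u φ)) -
        C ((J - 1) ^ 2 : R) * dirDeriv u φ ^ 2 := by
  rw [← gram_det_eq_wedge_sq_mul_det (hessianMatrix_isSymm φ) X fun i => C (u i),
    X_dotProduct_hessianMatrix_mulVec_X hφ, C_dotProduct_hessianMatrix_mulVec_X hφ,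
    dotProduct_hessianMatrix_mulVec_C, C_pow]
  ring

lemma wedge_sq_mul_restrictLine_det_hessianMatrix (hφ : φ.IsHomogeneous J) (v u : Fin 2 → R)
    {p : Polynomial R} (hp : p = restrictLine v u φ) :
    Polynomial.C ((v 0 * u 1 - v 1 * u 0) ^ 2) * restrictLine v u (hessianMatrix φ).det =
      Polynomial.C (J * (J - 1) : R) * (p * p.derivative.derivative) -
        Polynomial.C ((J - 1) ^ 2 : R) * p.derivative ^ 2 := by
  have hC (r : R) : restrictLine v u (C r) = Polynomial.C r := algHom_C _ r
  have hwedge : restrictLine v u (X 0 * C (u 1) - X 1 * C (u 0)) =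
      Polynomial.C (v 0 * u 1 - v 1 * u 0) := by
    simp only [restrictLine, map_sub, map_mul, aeval_X, algHom_C, Polynomial.algebraMap_eq]
    ring
  have h := congrArg (restrictLine v u) (wedge_sq_mul_det_hessianMatrix hφ u)
  rw [map_mul (restrictLine v u) (_ ^ 2), map_pow (restrictLine v u) (_ - _), hwedge] at h
  simpa only [hp, derivative_restrictLine, map_sub, map_mul, map_pow, hC] using h

variable {a b : R} {u : Fin 2 → R}

lemma restrictLine_linearForm (hu : a * u 0 + b * u 1 = 1) :
    restrictLine ![-b, a] u (C a * X 0 + C b * X 1) = Polynomial.X := by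
  have hC : Polynomial.C a * Polynomial.C (u 0) + Polynomial.C b * Polynomial.C (u 1) = 1 := by
    simpa only [map_add, map_mul, map_one] using congrArg Polynomial.C hu
  simp only [restrictLine, map_add, map_mul, aeval_X, algHom_C, Polynomial.algebraMap_eq,
    Matrix.cons_val_zero, Matrix.cons_val_one, map_neg]
  linear_combination Polynomial.X * hC

/- `![l, m]` are the coordinates dual to the basis `u, v` with `v = ![-b, a]`, and `![X 0, X 1]` is
`l u + m v`; in these coordinates `φ` is the homogenization of its restriction to `v + t u`. -/
lemma aeval_homogenize_restrictLine (hφ : φ.IsHomogeneous J) (hu : a * u 0 + b * u 1 = 1) :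
    aeval ![C a * X 0 + C b * X 1, C (-u 1) * X 0 + C (u 0) * X 1]
      ((restrictLine ![-b, a] u φ).homogenize J) = φ := by
  let g : Fin 2 → MvPolynomial (Fin 2) R := fun i => C (![-b, a] i) * X 1 + C (u i) * X 0
  have hg : (aeval g φ).IsHomogeneous J := by
    simpa using hφ.aeval g fun i =>
      (isHomogeneous_C_mul_X _ _).add (isHomogeneous_C_mul_X _ _)
  have hline : aeval ![Polynomial.X, 1] (aeval g φ) = restrictLine ![-b, a] u φ := by
    rw [comp_aeval_apply, restrictLine]
    simp [g, Polynomial.algebraMap_eq]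
  have hinv : (fun i => aeval ![C a * X 0 + C b * X 1, C (-u 1) * X 0 + C (u 0) * X 1] (g i)) =
      (X : Fin 2 → MvPolynomial (Fin 2) R) := by
    have hC : C a * C (u 0) + C b * C (u 1) = (1 : MvPolynomial (Fin 2) R) := by
      simpa only [map_add, map_mul, map_one] using congrArg (C (σ := Fin 2)) hu
    funext i
    simp only [g, map_add, map_mul, aeval_X, algHom_C, algebraMap_eq, Matrix.cons_val_zero,
      Matrix.cons_val_one]
    fin_cases i
    · simp only [Fin.zero_eta, Matrix.cons_val_zero, map_neg]
      linear_combination X 0 * hC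
    · simp only [Fin.mk_one, Matrix.cons_val_one, Matrix.cons_val_fin_one, map_neg]
      linear_combination X 1 * hC
  rw [Polynomial.homogenize_eq_of_isHomogeneous hg hline, comp_aeval_apply, hinv,
    aeval_X_left_apply]

lemma eq_C_mul_linearForm_pow_of_restrictLine_eq_C (hφ : φ.IsHomogeneous J)
    (hu : a * u 0 + b * u 1 = 1) {c : R} (h : restrictLine ![-b, a] u φ = Polynomial.C c) :
    φ = C c * (C (-u 1) * X 0 + C (u 0) * X 1) ^ J := by
  rw [← aeval_homogenize_restrictLine hφ hu, h]
  simp [algebraMap_eq]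

lemma linearForm_dvd_of_eval_eq_zero (hφ : φ.IsHomogeneous J) (hu : a * u 0 + b * u 1 = 1)
    (h : eval ![-b, a] φ = 0) : C a * X 0 + C b * X 1 ∣ φ := by
  rw [← coeff_zero_restrictLine _ u] at h
  obtain ⟨q, hq⟩ := X_zero_dvd_homogenize h J
  rw [← aeval_homogenize_restrictLine hφ hu, hq, map_mul, aeval_X]
  exact dvd_mul_right _ _

end BinaryForm

section Field

variable {K : Type*} [Field K] {φ : MvPolynomial (Fin 2) K} {J : ℕ} {a b : K}

lemma exists_eval_dirDeriv_eq_zero (hφ : φ.IsHomogeneous J) (hJ : (J : K) ≠ 0)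
    (hv : eval ![-b, a] φ ≠ 0) :
    ∃ u : Fin 2 → K, a * u 0 + b * u 1 = 1 ∧ eval ![-b, a] (dirDeriv u φ) = 0 := by
  set x := eval ![-b, a] (pderiv 0 φ) with hx
  set y := eval ![-b, a] (pderiv 1 φ) with hy
  have euler : -b * x + a * y = J * eval ![-b, a] φ := by
    simpa [Fin.sum_univ_two] using congrArg (eval ![-b, a]) hφ.sum_X_mul_pderiv
  have hxy : -b * x + a * y ≠ 0 := euler ▸ mul_ne_zero hJ hv
  refine ⟨![y / (-b * x + a * y), -x / (-b * x + a * y)], ?_, ?_⟩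
  · rw [← div_self hxy]
    simp only [Matrix.cons_val_zero, Matrix.cons_val_one]
    ring
  · simp only [dirDeriv_apply, Fin.sum_univ_two, map_add, map_mul, eval_C, ← hx, ← hy,
      Matrix.cons_val_zero, Matrix.cons_val_one]
    ring

lemma restrictLine_eq_C_of_pow_dvd_det_hessianMatrix [CharZero K] (hJ : 2 ≤ J)
    (hφ : φ.IsHomogeneous J) {u : Fin 2 → K} (hu : a * u 0 + b * u 1 = 1)
    (hv : eval ![-b, a] φ ≠ 0) (hstat : eval ![-b, a] (dirDeriv u φ) = 0)
    (hdvd : (C a * X 0 + C b * X 1) ^ (J - 1) ∣ (hessianMatrix φ).det) :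
    restrictLine ![-b, a] u φ = Polynomial.C (eval ![-b, a] φ) := by
  set p := restrictLine ![-b, a] u φ with hp
  have hp0 : p.coeff 0 = eval ![-b, a] φ := coeff_zero_restrictLine _ _ _
  have hp1 : p.derivative.coeff 0 = 0 := by
    rw [hp, derivative_restrictLine, coeff_zero_restrictLine, hstat]
  have hA : (J * (J - 1) : K) ≠ 0 :=
    mul_ne_zero (by norm_cast; omega) (sub_ne_zero.2 (by norm_cast; omega))
  have hhess : Polynomial.X ^ (J - 1) ∣
      Polynomial.C (J * (J - 1) : K) * (p * p.derivative.derivative) -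
        Polynomial.C ((J - 1) ^ 2 : K) * p.derivative ^ 2 := by
    rw [← wedge_sq_mul_restrictLine_det_hessianMatrix hφ _ _ hp,
      ← restrictLine_linearForm hu, ← map_pow]
    exact (map_dvd _ hdvd).mul_left _
  have hderiv : Polynomial.X ^ J ∣ p.derivative := by
    simpa [Nat.sub_add_cancel (one_le_two.trans hJ)] using
      X_pow_succ_dvd_derivative hA (hp0 ▸ hv) hp1 hhess
  have hdeg : p.natDegree ≤ J := (natDegree_restrictLine_le _ _ _).trans hφ.totalDegree_le
  rw [← hp0]
  exact eq_C_of_X_pow_dvd_derivative hdeg hderiv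

theorem stmt_8_general [CharZero K] (hJ : 2 ≤ J) (hφ : φ.IsHomogeneous J)
    (hnotpow : ¬ ∃ c l₁ l₂ : K, φ = C c * (C l₁ * X 0 + C l₂ * X 1) ^ J)
    (hab : ¬ (a = 0 ∧ b = 0))
    (hdvd : (C a * X 0 + C b * X 1) ^ (J - 1) ∣ (hessianMatrix φ).det) :
    C a * X 0 + C b * X 1 ∣ φ := by
  by_cases hv : eval ![-b, a] φ = 0
  · obtain ⟨u, hu⟩ : ∃ u : Fin 2 → K, a * u 0 + b * u 1 = 1 := by
      obtain ha | hb := not_and_or.1 hab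
      · exact ⟨![a⁻¹, 0], by simp [ha]⟩
      · exact ⟨![0, b⁻¹], by simp [hb]⟩
    exact linearForm_dvd_of_eval_eq_zero hφ hu hv
  · have hJ0 : (J : K) ≠ 0 := by norm_cast; omega
    obtain ⟨u, hu, hstat⟩ := exists_eval_dirDeriv_eq_zero hφ hJ0 hv
    have hconst := restrictLine_eq_C_of_pow_dvd_det_hessianMatrix hJ hφ hu hv hstat hdvd
    exact (hnotpow ⟨_, _, _, eq_C_mul_linearForm_pow_of_restrictLine_eq_C hφ hu hconst⟩).elim

end Field

lemma hessDet_eq_det_hessianMatrix (φ : MvPolynomial (Fin 2) ℝ) :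
    hessDet φ = (hessianMatrix φ).det := by
  rw [Matrix.det_fin_two, (hessianMatrix_isSymm φ).apply 0 1, hessDet, sq]
  rfl

/-- For a homogeneous polynomial φ of degree J ≥ 2 with ∇φ(0) = 0 which is not of the form
C(λ₁z₁ + λ₂z₂)^J (λ₁, λ₂ ∈ ℂ), every real linear form dividing the Hessian determinant ω
with multiplicity strictly greater than J − 2 also divides φ. -/
theorem stmt_8 (φ : MvPolynomial (Fin 2) ℝ) (J : ℕ) (hJ : 2 ≤ J)
    (hhom : φ.IsHomogeneous J)
    (hgrad₁ : eval ![(0 : ℝ), 0] (pderiv 0 φ) = 0)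
    (hgrad₂ : eval ![(0 : ℝ), 0] (pderiv 1 φ) = 0)
    (hnotpow : ¬ ∃ (c : ℝ) (l₁ l₂ : ℂ),
      MvPolynomial.map (algebraMap ℝ ℂ) φ =
        C ((c : ℂ)) * (C l₁ * X 0 + C l₂ * X 1) ^ J) :
    ∀ a b : ℝ, ¬ (a = 0 ∧ b = 0) → ∀ n : ℕ, J - 2 < n →
      (C a * X 0 + C b * X 1 : MvPolynomial (Fin 2) ℝ) ^ n ∣ hessDet φ →
      (C a * X 0 + C b * X 1 : MvPolynomial (Fin 2) ℝ) ∣ φ := by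
  intro a b hab n hn hdvd
  refine stmt_8_general hJ hhom ?_ hab ?_
  · rintro ⟨c, l₁, l₂, rfl⟩
    exact hnotpow ⟨c, l₁, l₂, by simp⟩
  · rw [← hessDet_eq_det_hessianMatrix]
    exact (pow_dvd_pow _ (by omega)).trans hdvd
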